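/- Let f ∈ C(𝕋) and h > 0. Then (4/9)·K̃₂(f, h/8, h/(4√3)) ≤ W₂*(f, χ_h) ≤ 2·K̃₂(f, h/8, h/(4√3)). -/

import Mathlib

/-!
For a primitive `F` of `f` put `S_v(t) = F(t + v) - F(t - v) - 2 v f(t)`. Then
`f - f * χ_u = -S_{u/2} / u`, so everything about `W₂` is a statement about `S_v`.

*Upper bound.* `∂S_v(t)/∂v` is the second difference `f(t+v) + f(t-v) - 2 f(t)`. Splitting
`f = (f - g₁) + (g₁ - g₂) + g₂` bounds it by `4A + 2vB + v²C`, where `A`, `B`, `C` are the three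
norms in `K̃₂`. Integrating in `v` and dividing by `u = 2v` gives `2A + (u/4) B + (u²/24) C`,
which is twice the quantity minimized in `K̃₂`.

*Lower bound.* A single smoothing suffices, so `g₁ = g₂ = G` is taken. With `H = h/2`, let `G` be
the average of `f` against the kernel `(3 / (2H³)) (H - |s|)²` on `[-H, H]`. This kernel is
the Peano kernel of `f * χ_h - f`, i.e. `G'' = (24/h²) (f * χ_h - f)`, whence
`‖G''‖ ≤ (24/h²) W₂(f, χ_h)`. It is also a mixture of the kernels `χ_u`, `0 < u ≤ h`:
`G - f = (3/H³) ∫₀ᴴ (H - u) S_u du`, whence `‖f - G‖ ≤ W₂*(f, χ_h)`. Altogether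
`K̃₂ ≤ (1 + 1/2) W₂*`, which is stronger than the factor `9/4` required.

To avoid convolutions, `G` is written through iterated primitives of `f`, and integral estimates
are replaced by comparison of derivatives.
-/

open MeasureTheory Real

/-- Uniform (sup) norm of a real function. -/
noncomputable def unorm (f : ℝ → ℝ) : ℝ := ⨆ u : ℝ, |f u|

/-- Convolution of two real functions. -/
noncomputable def conv (f g : ℝ → ℝ) : ℝ → ℝ := fun t => ∫ u : ℝ, f u * g (t - u)

/-- Normalized characteristic function of `(-h/2, h/2)`. -/
noncomputable def chi (h : ℝ) : ℝ → ℝ := fun t => if -h/2 < t ∧ t < h/2 then 1/h else 0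

/-- Convolution powers `χ_h^k` (defined for `k ≥ 1`; junk value `0` at `k = 0`). -/
noncomputable def chiPow (h : ℝ) : ℕ → (ℝ → ℝ)
  | 0 => fun _ => 0
  | 1 => chi h
  | (k+2) => conv (chiPow h (k+1)) (chi h)

/-- Special modulus of continuity `W₂(f, χ_h^k) = ‖f - f*χ_h^k‖`. -/
noncomputable def W2 (f : ℝ → ℝ) (h : ℝ) (k : ℕ) : ℝ :=
  unorm (fun t => f t - conv f (chiPow h k) t)

/-- `W₂*(f, χ_h^k) = sup_{0 < u ≤ h} W₂(f, χ_u^k)`. -/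
noncomputable def W2star (f : ℝ → ℝ) (h : ℝ) (k : ℕ) : ℝ :=
  ⨆ u : Set.Ioc (0:ℝ) h, W2 f u.1 k

/-- Second Peetre K-functional: infimum over twice continuously differentiable
1-periodic functions `g` of `‖f - g‖ + h² ‖D²g‖`. -/
noncomputable def K2 (f : ℝ → ℝ) (h : ℝ) : ℝ :=
  ⨅ g : {g : ℝ → ℝ // ContDiff ℝ 2 g ∧ Function.Periodic g 1},
    unorm (fun t => f t - g.1 t) + h^2 * unorm (iteratedDeriv 2 g.1)

/-- Generalized K-functional `K̃₂(f, h₁, h₂)`. -/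
noncomputable def Ktilde2 (f : ℝ → ℝ) (h1 h2 : ℝ) : ℝ :=
  ⨅ p : {p : (ℝ → ℝ) × (ℝ → ℝ) //
      (ContDiff ℝ 1 p.1 ∧ Function.Periodic p.1 1) ∧
      (ContDiff ℝ 2 p.2 ∧ Function.Periodic p.2 1)},
    unorm (fun t => f t - p.1.1 t) + h1 * unorm (deriv (fun t => p.1.1 t - p.1.2 t))
      + h2^2 * unorm (iteratedDeriv 2 p.1.2)

/-- Classical second modulus of smoothness. -/
noncomputable def omega2 (f : ℝ → ℝ) (h : ℝ) : ℝ :=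
  ⨆ u : Set.Ioc (0:ℝ) h, ⨆ t : ℝ, |f (t + u.1) - 2 * f t + f (t - u.1)|

/-- `τ` is a real 1-periodic trigonometric polynomial of degree at most `n - 1`. -/
def IsTrigPolyDegLT (n : ℕ) (τ : ℝ → ℝ) : Prop :=
  ∃ a b : ℕ → ℝ, ∀ t : ℝ, τ t =
    ∑ j ∈ Finset.range n, (a j * Real.cos (2 * Real.pi * j * t) + b j * Real.sin (2 * Real.pi * j * t))

/-- Best approximation `E_{n-1}(f)` by trigonometric polynomials of degree at most `n-1`. -/
noncomputable def bestApprox (n : ℕ) (f : ℝ → ℝ) : ℝ :=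
  ⨅ τ : {τ : ℝ → ℝ // IsTrigPolyDegLT n τ}, unorm (fun t => f t - τ.1 t)

/-! ### Sup norms of bounded functions -/

lemma unorm_nonneg (f : ℝ → ℝ) : 0 ≤ unorm f := Real.iSup_nonneg fun _ => abs_nonneg _

lemma unorm_le {f : ℝ → ℝ} {C : ℝ} (hf : ∀ x, |f x| ≤ C) : unorm f ≤ C := ciSup_le hf

/-- A bound on `f` is needed here: `unorm` of an unbounded function is `0`. -/
lemma le_unorm_of_bound {f : ℝ → ℝ} {C : ℝ} (hf : ∀ x, |f x| ≤ C) (x : ℝ) : |f x| ≤ unorm f :=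
  le_ciSup (f := fun u => |f u|) ⟨C, by rintro _ ⟨y, rfl⟩; exact hf y⟩ x

lemma exists_bound {f : ℝ → ℝ} (hf : Continuous f) (hp : Function.Periodic f 1) :
    ∃ C, ∀ x, |f x| ≤ C := by
  obtain ⟨C, hC⟩ := (hp.isBounded_of_continuous one_ne_zero hf).exists_norm_le
  exact ⟨C, fun x => hC _ ⟨x, rfl⟩⟩

lemma le_unorm {f : ℝ → ℝ} (hf : Continuous f) (hp : Function.Periodic f 1) (x : ℝ) :
    |f x| ≤ unorm f := by
  obtain ⟨C, hC⟩ := exists_bound hf hp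
  exact le_unorm_of_bound hC x

/-! ### Comparison of derivatives -/

lemma eq_of_hasDerivAt_zero {f : ℝ → ℝ} (hf : ∀ x, HasDerivAt f 0 x) (x y : ℝ) : f x = f y :=
  is_const_of_deriv_eq_zero (fun x => (hf x).differentiableAt) (fun x => (hf x).deriv) x y

/-- A function vanishing at `0` is dominated by a function vanishing at `0` whose derivative
dominates the absolute value of its own. -/
lemma abs_le_of_deriv_le {q q' B B' : ℝ → ℝ} {v : ℝ} (hv : 0 ≤ v) (hq0 : q 0 = 0)
    (hB0 : B 0 = 0) (hq : ∀ x, HasDerivAt q (q' x) x) (hB : ∀ x, HasDerivAt B (B' x) x)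
    (hb : ∀ x, 0 ≤ x → x ≤ v → |q' x| ≤ B' x) : |q v| ≤ B v := by
  have := image_norm_le_of_norm_deriv_right_le_deriv_boundary (f := q) (f' := q') (a := 0) (b := v)
    (fun x _ => (hq x).continuousAt.continuousWithinAt) (fun x _ => (hq x).hasDerivWithinAt)
    (B := B) (B' := B') (by simp [hq0, hB0]) hB
    (fun x hx => hb x hx.1 hx.2.le)
  exact this ⟨hv, le_rfl⟩

lemma hasDerivAt_shift_add {F : ℝ → ℝ} {a : ℝ} (t x : ℝ) (hF : HasDerivAt F a (t + x)) :
    HasDerivAt (fun v => F (t + v)) a x := by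
  simpa using hF.comp_const_add t x

lemma hasDerivAt_shift_sub {F : ℝ → ℝ} {a : ℝ} (t x : ℝ) (hF : HasDerivAt F a (t - x)) :
    HasDerivAt (fun v => F (t - v)) (-a) x := by
  simpa using hF.comp_const_sub t x

lemma periodic_deriv {g : ℝ → ℝ} (hp : Function.Periodic g 1) : Function.Periodic (deriv g) 1 := by
  intro x
  have h1 : (fun y => g (y + 1)) = g := funext hp
  rw [← deriv_comp_add_const, h1]

lemma second_diff_le_of_deriv {g : ℝ → ℝ} {B : ℝ} (hg : Differentiable ℝ g)
    (hB : ∀ x, |deriv g x| ≤ B) (t : ℝ) {v : ℝ} (hv : 0 ≤ v) :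
    |g (t + v) + g (t - v) - 2 * g t| ≤ 2 * v * B := by
  refine abs_le_of_deriv_le (q := fun v => g (t + v) + g (t - v) - 2 * g t)
    (q' := fun v => deriv g (t + v) + -deriv g (t - v)) (B := fun v => 2 * v * B)
    (B' := fun _ => 2 * B) hv (by simp; ring) (by simp) (fun x => ?_) (fun x => ?_) ?_
  · exact ((hasDerivAt_shift_add t x (hg _).hasDerivAt).add
      (hasDerivAt_shift_sub t x (hg _).hasDerivAt)).sub_const _
  · simpa using ((hasDerivAt_id x).const_mul 2).mul_const B
  · intro x _ _
    have h1 := abs_le.1 (hB (t + x))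
    have h2 := abs_le.1 (hB (t - x))
    rw [abs_le]; constructor <;> linarith [h1.1, h1.2, h2.1, h2.2]

lemma second_diff_le_of_second_deriv {g : ℝ → ℝ} {C : ℝ} (hg : Differentiable ℝ g)
    (hg' : Differentiable ℝ (deriv g)) (hC : ∀ x, |deriv (deriv g) x| ≤ C) (t : ℝ) {v : ℝ}
    (hv : 0 ≤ v) : |g (t + v) + g (t - v) - 2 * g t| ≤ v ^ 2 * C := by
  refine abs_le_of_deriv_le (q := fun v => g (t + v) + g (t - v) - 2 * g t)
    (q' := fun v => deriv g (t + v) + -deriv g (t - v)) (B := fun v => v ^ 2 * C)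
    (B' := fun v => 2 * v * C) hv (by simp; ring) (by simp) (fun x => ?_) (fun x => ?_) ?_
  · exact ((hasDerivAt_shift_add t x (hg _).hasDerivAt).add
      (hasDerivAt_shift_sub t x (hg _).hasDerivAt)).sub_const _
  · simpa using (hasDerivAt_pow 2 x).mul_const C
  · intro x hx _
    refine abs_le_of_deriv_le (q := fun v => deriv g (t + v) + -deriv g (t - v))
      (q' := fun v => deriv (deriv g) (t + v) + - -deriv (deriv g) (t - v))
      (B := fun v => 2 * v * C) (B' := fun _ => 2 * C) hx (by simp) (by simp)
      (fun y => ?_) (fun y => ?_) ?_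
    · exact (hasDerivAt_shift_add t y (hg' _).hasDerivAt).add
        (hasDerivAt_shift_sub t y (hg' _).hasDerivAt).neg
    · simpa using ((hasDerivAt_id y).const_mul 2).mul_const C
    · intro y _ _
      have h1 := abs_le.1 (hC (t + y))
      have h2 := abs_le.1 (hC (t - y))
      rw [abs_le]; constructor <;> linarith [h1.1, h1.2, h2.1, h2.2]

/-! ### Primitives and the modulus `W₂` -/

/-- The primitive of `f` vanishing at `0`. -/
noncomputable def prim (f : ℝ → ℝ) (t : ℝ) : ℝ := ∫ s in (0:ℝ)..t, f s

lemma hasDerivAt_prim {f : ℝ → ℝ} (hf : Continuous f) (x : ℝ) : HasDerivAt (prim f) (f x) x :=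
  (hf.integral_hasStrictDerivAt 0 x).hasDerivAt

lemma continuous_prim {f : ℝ → ℝ} (hf : Continuous f) : Continuous (prim f) :=
  continuous_iff_continuousAt.2 fun x => (hasDerivAt_prim hf x).continuousAt

/-- `S_v(t) = ∫_{-v}^{v} (f(t + s) - f(t)) ds`, written through the primitive of `f`. -/
noncomputable def centered (f : ℝ → ℝ) (v t : ℝ) : ℝ :=
  prim f (t + v) - prim f (t - v) - 2 * v * f t

lemma hasDerivAt_centered {f : ℝ → ℝ} (hf : Continuous f) (t x : ℝ) :
    HasDerivAt (fun v => centered f v t) (f (t + x) + f (t - x) - 2 * f t) x := by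
  have h := ((hasDerivAt_shift_add t x (hasDerivAt_prim hf _)).sub
    (hasDerivAt_shift_sub t x (hasDerivAt_prim hf _))).sub
    (((hasDerivAt_id x).const_mul 2).mul_const (f t))
  convert! h using 1
  ring

lemma conv_chi {f : ℝ → ℝ} (hf : Continuous f) {u : ℝ} (hu : 0 < u) (t : ℝ) :
    conv f (chi u) t = (1 / u) * (prim f (t + u / 2) - prim f (t - u / 2)) := by
  have h1 : (fun s => f s * chi u (t - s)) =
      (Set.Ioo (t - u / 2) (t + u / 2)).indicator (fun s => f s * (1 / u)) := by
    funext s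
    by_cases hs : s ∈ Set.Ioo (t - u / 2) (t + u / 2)
    · rw [Set.indicator_of_mem hs, chi, if_pos]
      constructor <;> linarith [hs.1, hs.2]
    · rw [Set.indicator_of_notMem hs, chi, if_neg, mul_zero]
      rintro ⟨h1, h2⟩
      exact hs ⟨by linarith, by linarith⟩
  have h2 : prim f (t + u / 2) - prim f (t - u / 2) = ∫ s in (t - u / 2)..(t + u / 2), f s :=
    intervalIntegral.integral_interval_sub_left (hf.intervalIntegrable _ _)
      (hf.intervalIntegrable _ _)
  rw [conv, h1, integral_indicator measurableSet_Ioo, integral_mul_const, h2,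
    intervalIntegral.integral_of_le (by linarith), integral_Ioc_eq_integral_Ioo, mul_comm]

lemma sub_conv_chi {f : ℝ → ℝ} (hf : Continuous f) {u : ℝ} (hu : 0 < u) (t : ℝ) :
    f t - conv f (chiPow u 1) t = -(1 / u) * centered f (u / 2) t := by
  rw [chiPow, conv_chi hf hu, centered]
  field_simp
  ring

/-- A cubic bound on `S_v` gives a bound on `f - f * χ_u`. -/
lemma sub_conv_le {f : ℝ → ℝ} (hf : Continuous f) {A B C : ℝ}
    (hd : ∀ t v, 0 ≤ v → |f (t + v) + f (t - v) - 2 * f t| ≤ 4 * A + 2 * v * B + v ^ 2 * C)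
    {u : ℝ} (hu : 0 < u) (t : ℝ) :
    |f t - conv f (chiPow u 1) t| ≤ 2 * A + u / 4 * B + u ^ 2 / 24 * C := by
  have h1 : |centered f (u / 2) t| ≤
      4 * A * (u / 2) + B * (u / 2) ^ 2 + C / 3 * (u / 2) ^ 3 := by
    refine abs_le_of_deriv_le (q := fun v => centered f v t)
      (B := fun v => 4 * A * v + B * v ^ 2 + C / 3 * v ^ 3)
      (B' := fun v => 4 * A + 2 * v * B + v ^ 2 * C) (by positivity) (by simp [centered])
      (by simp) (fun x => hasDerivAt_centered hf t x) (fun x => ?_) (fun x hx _ => hd t x hx)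
    have h := (((hasDerivAt_id x).const_mul (4 * A)).add
      ((hasDerivAt_pow 2 x).const_mul B)).add ((hasDerivAt_pow 3 x).const_mul (C / 3))
    convert! h using 1
    simp
    ring
  rw [sub_conv_chi hf hu, abs_mul, abs_neg, abs_of_pos (one_div_pos.2 hu)]
  calc 1 / u * |centered f (u / 2) t|
      ≤ 1 / u * (4 * A * (u / 2) + B * (u / 2) ^ 2 + C / 3 * (u / 2) ^ 3) := by gcongr
    _ = 2 * A + u / 4 * B + u ^ 2 / 24 * C := by field_simp; ring

lemma sub_conv_le_of_bound {f : ℝ → ℝ} (hf : Continuous f) {M : ℝ} (hM : ∀ x, |f x| ≤ M)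
    {u : ℝ} (hu : 0 < u) (t : ℝ) : |f t - conv f (chiPow u 1) t| ≤ 2 * M := by
  have h := sub_conv_le hf (A := M) (B := 0) (C := 0) (fun t v _ => ?_) hu t
  · simpa using h
  · have h1 := abs_le.1 (hM (t + v))
    have h2 := abs_le.1 (hM (t - v))
    have h3 := abs_le.1 (hM t)
    rw [abs_le]; constructor <;> linarith [h1.1, h1.2, h2.1, h2.2, h3.1, h3.2]

lemma sub_conv_le_W2star {f : ℝ → ℝ} (hf : Continuous f) (hp : Function.Periodic f 1)
    {h u : ℝ} (hu : 0 < u) (huh : u ≤ h) (t : ℝ) :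
    |f t - conv f (chiPow u 1) t| ≤ W2star f h 1 := by
  obtain ⟨M, hM⟩ := exists_bound hf hp
  refine (le_unorm_of_bound (fun x => sub_conv_le_of_bound hf hM hu x) t).trans ?_
  refine le_ciSup (f := fun u : Set.Ioc (0:ℝ) h => W2 f u.1 1) ⟨2 * M, ?_⟩ ⟨u, hu, huh⟩
  rintro _ ⟨y, rfl⟩
  exact unorm_le fun x => sub_conv_le_of_bound hf hM y.2.1 x

lemma centered_le {f : ℝ → ℝ} (hf : Continuous f) (hp : Function.Periodic f 1)
    {h v : ℝ} (hv : 0 ≤ v) (hvh : v ≤ h / 2) (t : ℝ) :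
    |centered f v t| ≤ 2 * v * W2star f h 1 := by
  rcases hv.eq_or_lt with rfl | hv
  · simp [centered]
  have h1 := sub_conv_le_W2star hf hp (h := h) (u := 2 * v) (by positivity) (by linarith) t
  rw [sub_conv_chi hf (by positivity), abs_mul, abs_neg, abs_of_pos (by positivity),
    mul_div_cancel_left₀ _ two_ne_zero, one_div_mul_eq_div, div_le_iff₀ (by positivity)] at h1
  linarith

/-! ### The upper bound -/

lemma W2star_le {f : ℝ → ℝ} (hf : Continuous f) (hp : Function.Periodic f 1) {h : ℝ} (hh : 0 < h)
    {g₁ g₂ : ℝ → ℝ} (hg₁ : ContDiff ℝ 1 g₁) (hp₁ : Function.Periodic g₁ 1)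
    (hg₂ : ContDiff ℝ 2 g₂) (hp₂ : Function.Periodic g₂ 1) :
    W2star f h 1 ≤ 2 * (unorm (fun t => f t - g₁ t) + h / 8 * unorm (deriv fun t => g₁ t - g₂ t)
      + h ^ 2 / 48 * unorm (iteratedDeriv 2 g₂)) := by
  have hA := le_unorm (f := fun t => f t - g₁ t) (hf.sub hg₁.continuous)
    (fun x => by simp only [hp x, hp₁ x])
  have hd : ContDiff ℝ 1 (fun t => g₁ t - g₂ t) := hg₁.sub (hg₂.of_le one_le_two)
  have hB := le_unorm (f := deriv fun t => g₁ t - g₂ t) (hd.continuous_deriv le_rfl)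
    (periodic_deriv fun x => by simp only [hp₁ x, hp₂ x])
  have hit : iteratedDeriv 2 g₂ = deriv (deriv g₂) := by
    rw [iteratedDeriv_succ, iteratedDeriv_one]
  have hC := le_unorm (f := iteratedDeriv 2 g₂) (hg₂.continuous_iteratedDeriv 2 le_rfl)
    (hit ▸ periodic_deriv (periodic_deriv hp₂))
  have hg₂' : Differentiable ℝ (deriv g₂) := by
    have := hg₂.differentiable_iteratedDeriv 1 (by norm_num)
    rwa [iteratedDeriv_one] at this
  have hA0 := unorm_nonneg (fun t => f t - g₁ t)
  have hB0 := unorm_nonneg (deriv fun t => g₁ t - g₂ t)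
  have hC0 := unorm_nonneg (iteratedDeriv 2 g₂)
  set A := unorm (fun t => f t - g₁ t)
  set B := unorm (deriv fun t => g₁ t - g₂ t)
  set C := unorm (iteratedDeriv 2 g₂)
  have key : ∀ t v, 0 ≤ v →
      |f (t + v) + f (t - v) - 2 * f t| ≤ 4 * A + 2 * v * B + v ^ 2 * C := by
    intro t v hv
    have e1 := abs_le.1 (hA (t + v))
    have e2 := abs_le.1 (hA (t - v))
    have e3 := abs_le.1 (hA t)
    have e4 := abs_le.1 (second_diff_le_of_deriv (hd.differentiable one_ne_zero) hB t hv)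
    have e5 := abs_le.1 (second_diff_le_of_second_deriv (hg₂.differentiable two_ne_zero) hg₂'
      (hit ▸ hC) t hv)
    rw [abs_le]
    constructor <;>
      linarith [e1.1, e1.2, e2.1, e2.2, e3.1, e3.2, e4.1, e4.2, e5.1, e5.2]
  have : Nonempty (Set.Ioc (0:ℝ) h) := ⟨⟨h, hh, le_rfl⟩⟩
  refine ciSup_le fun u => unorm_le fun t => ?_
  obtain ⟨u, hu, huh⟩ := u
  refine (sub_conv_le hf key hu t).trans ?_
  have i1 : u / 4 * B ≤ h / 4 * B := by gcongr
  have i2 : u ^ 2 / 24 * C ≤ h ^ 2 / 24 * C := by gcongr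
  linarith

/-! ### The lower bound -/

/-- The average of `f` against the kernel `(3 / (2H³)) (H - |s|)²` on `[-H, H]`, integrated by
parts so that only iterated primitives of `f` occur. -/
noncomputable def smooth (f : ℝ → ℝ) (H t : ℝ) : ℝ :=
  3 / H ^ 3 * (prim (prim (prim f)) (t + H) - prim (prim (prim f)) (t - H)
    - 2 * H * prim (prim f) t)

lemma hasDerivAt_smooth_aux {F F' : ℝ → ℝ} (H c : ℝ) {G G' : ℝ → ℝ}
    (hF : ∀ x, HasDerivAt F (F' x) x) (hG : ∀ x, HasDerivAt G (G' x) x) (x : ℝ) :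
    HasDerivAt (fun t => c * (F (t + H) - F (t - H) - 2 * H * G t))
      (c * (F' (x + H) - F' (x - H) - 2 * H * G' x)) x :=
  ((((hF _).comp_add_const x H).sub ((hF _).comp_sub_const x H)).sub
    ((hG x).const_mul (2 * H))).const_mul c

lemma deriv_smooth {f : ℝ → ℝ} (hf : Continuous f) (H : ℝ) :
    (∀ x, HasDerivAt (smooth f H) (3 / H ^ 3 * (prim (prim f) (x + H) - prim (prim f) (x - H)
      - 2 * H * prim f x)) x) ∧
    (∀ x, HasDerivAt (fun x => 3 / H ^ 3 * (prim (prim f) (x + H) - prim (prim f) (x - H)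
      - 2 * H * prim f x)) (3 / H ^ 3 * centered f H x) x) := by
  have h1 := hasDerivAt_prim hf
  have h2 := hasDerivAt_prim (continuous_prim hf)
  have h3 := hasDerivAt_prim (continuous_prim (continuous_prim hf))
  exact ⟨hasDerivAt_smooth_aux H _ h3 h2, hasDerivAt_smooth_aux H _ h2 h1⟩

lemma continuous_centered {f : ℝ → ℝ} (hf : Continuous f) (H : ℝ) :
    Continuous (centered f H) := by
  have := continuous_prim hf
  unfold centered
  fun_prop

lemma iteratedDeriv_smooth {f : ℝ → ℝ} (hf : Continuous f) (H : ℝ) :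
    iteratedDeriv 2 (smooth f H) = fun x => 3 / H ^ 3 * centered f H x := by
  obtain ⟨h1, h2⟩ := deriv_smooth hf H
  rw [iteratedDeriv_succ, iteratedDeriv_one, funext fun x => (h1 x).deriv]
  exact funext fun x => (h2 x).deriv

lemma contDiff_smooth {f : ℝ → ℝ} (hf : Continuous f) (H : ℝ) : ContDiff ℝ 2 (smooth f H) := by
  obtain ⟨h1, h2⟩ := deriv_smooth hf H
  rw [show (2 : WithTop ℕ∞) = 1 + 1 by norm_num, contDiff_succ_iff_deriv]
  refine ⟨fun x => (h1 x).differentiableAt, by simp, ?_⟩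
  rw [funext fun x => (h1 x).deriv, contDiff_one_iff_deriv]
  refine ⟨fun x => (h2 x).differentiableAt, ?_⟩
  rw [funext fun x => (h2 x).deriv]
  exact continuous_const.mul (continuous_centered hf H)

/-- The iterated primitives of `f` are periodic up to polynomials, which cancel in `smooth`. -/
lemma periodic_smooth {f : ℝ → ℝ} (hf : Continuous f) (hp : Function.Periodic f 1) (H : ℝ) :
    Function.Periodic (smooth f H) 1 := by
  have d1 := hasDerivAt_prim hf
  have d2 := hasDerivAt_prim (continuous_prim hf)
  have d3 := hasDerivAt_prim (continuous_prim (continuous_prim hf))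
  obtain ⟨c, hc⟩ : ∃ c, ∀ x, prim f (x + 1) = prim f x + c := by
    refine ⟨prim f (0 + 1) - prim f 0, fun x => ?_⟩
    have := eq_of_hasDerivAt_zero (f := fun x => prim f (x + 1) - prim f x) (fun x => ?_) x 0
    · linarith
    · convert! ((d1 _).comp_add_const x 1).sub (d1 x) using 1
      rw [hp x]; ring
  obtain ⟨d, hd⟩ : ∃ d, ∀ x, prim (prim f) (x + 1) = prim (prim f) x + c * x + d := by
    refine ⟨prim (prim f) (0 + 1) - prim (prim f) 0, fun x => ?_⟩
    have := eq_of_hasDerivAt_zero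
      (f := fun x => prim (prim f) (x + 1) - prim (prim f) x - c * x) (fun x => ?_) x 0
    · linarith
    · convert! (((d2 _).comp_add_const x 1).sub (d2 x)).sub ((hasDerivAt_id x).const_mul c)
        using 1
      rw [hc x]; ring
  obtain ⟨e, he⟩ : ∃ e, ∀ x, prim (prim (prim f)) (x + 1) =
      prim (prim (prim f)) x + c / 2 * x ^ 2 + d * x + e := by
    refine ⟨prim (prim (prim f)) (0 + 1) - prim (prim (prim f)) 0, fun x => ?_⟩
    have := eq_of_hasDerivAt_zero
      (f := fun x => prim (prim (prim f)) (x + 1) - prim (prim (prim f)) x - c / 2 * x ^ 2 - d * x)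
      (fun x => ?_) x 0
    · linarith
    · convert! ((((d3 _).comp_add_const x 1).sub (d3 x)).sub
        ((hasDerivAt_pow 2 x).const_mul (c / 2))).sub ((hasDerivAt_id x).const_mul d) using 1
      rw [hd x]; simp; ring
  intro t
  rw [smooth, smooth, show t + 1 + H = t + H + 1 by ring, show t + 1 - H = t - H + 1 by ring,
    he, he, hd]
  ring

/-- `f - G` is an average of `f - f * χ_u` over `0 < u ≤ h`. -/
lemma sub_smooth_le {f : ℝ → ℝ} (hf : Continuous f) (hp : Function.Periodic f 1) {h : ℝ}
    (hh : 0 < h) (t : ℝ) : |f t - smooth f (h / 2) t| ≤ W2star f h 1 := by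
  obtain ⟨H, hH⟩ : ∃ H, H = h / 2 := ⟨_, rfl⟩
  have hH0 : 0 < H := by rw [hH]; positivity
  set W := W2star f h 1 with hW
  have d2 := hasDerivAt_prim (continuous_prim hf)
  have d3 := hasDerivAt_prim (continuous_prim (continuous_prim hf))
  -- The function compared is `x ↦ ∫₀ˣ (H - u) S_u(t) du`, in closed form.
  have key := abs_le_of_deriv_le (v := H)
    (q := fun x => (H - x) * (prim (prim f) (t + x) + prim (prim f) (t - x))
      + prim (prim (prim f)) (t + x) - prim (prim (prim f)) (t - x)
      - 2 * H * prim (prim f) t - f t * (H * x ^ 2 - 2 / 3 * x ^ 3))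
    (q' := fun x => (H - x) * centered f x t)
    (B := fun x => W * (H * x ^ 2 - 2 / 3 * x ^ 3)) (B' := fun x => (H - x) * (2 * x * W))
    hH0.le (by simp; ring) (by simp) (fun x => ?_) (fun x => ?_) (fun x hx hxH => ?_)
  · rw [← hH]
    have e : f t - smooth f H t = -(3 / H ^ 3) * ((H - H) * (prim (prim f) (t + H)
        + prim (prim f) (t - H)) + prim (prim (prim f)) (t + H) - prim (prim (prim f)) (t - H)
        - 2 * H * prim (prim f) t - f t * (H * H ^ 2 - 2 / 3 * H ^ 3)) := by
      rw [smooth]; field_simp; ring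
    rw [e, abs_mul, abs_neg, abs_of_pos (by positivity)]
    calc _ ≤ 3 / H ^ 3 * (W * (H * H ^ 2 - 2 / 3 * H ^ 3)) := by gcongr
      _ = W := by field_simp; ring
  · have h := ((((((hasDerivAt_id x).const_sub H).mul ((hasDerivAt_shift_add t x (d2 _)).add
      (hasDerivAt_shift_sub t x (d2 _)))).add (hasDerivAt_shift_add t x (d3 _))).sub
      (hasDerivAt_shift_sub t x (d3 _))).sub_const (2 * H * prim (prim f) t)).sub
      ((((hasDerivAt_pow 2 x).const_mul H).sub ((hasDerivAt_pow 3 x).const_mul (2 / 3))).const_mul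
        (f t))
    convert! h using 1
    simp [centered]; ring
  · have h := (((hasDerivAt_pow 2 x).const_mul H).sub
      ((hasDerivAt_pow 3 x).const_mul (2 / 3))).const_mul W
    convert! h using 1
    simp; ring
  · rw [abs_mul, abs_of_nonneg (sub_nonneg.2 hxH)]
    exact mul_le_mul_of_nonneg_left (centered_le hf hp hx (hH ▸ hxH) t) (sub_nonneg.2 hxH)

lemma Ktilde2_le {f : ℝ → ℝ} {h₁ h₂ : ℝ} (hh₁ : 0 ≤ h₁) {g : ℝ → ℝ} (hg : ContDiff ℝ 2 g)
    (hp : Function.Periodic g 1) :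
    Ktilde2 f h₁ h₂ ≤ unorm (fun t => f t - g t) + h₂ ^ 2 * unorm (iteratedDeriv 2 g) := by
  have hz : unorm (deriv fun t => g t - g t) = 0 := by simp [unorm]
  have h0 := ciInf_le (f := fun p : {p : (ℝ → ℝ) × (ℝ → ℝ) //
      (ContDiff ℝ 1 p.1 ∧ Function.Periodic p.1 1) ∧
      (ContDiff ℝ 2 p.2 ∧ Function.Periodic p.2 1)} =>
    unorm (fun t => f t - p.1.1 t) + h₁ * unorm (deriv (fun t => p.1.1 t - p.1.2 t))
      + h₂ ^ 2 * unorm (iteratedDeriv 2 p.1.2)) ⟨0, ?_⟩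
      ⟨(g, g), ⟨hg.of_le one_le_two, hp⟩, hg, hp⟩
  · refine h0.trans_eq ?_
    simp only [hz, mul_zero, add_zero]
  · rintro _ ⟨p, rfl⟩
    have := unorm_nonneg (fun t => f t - p.1.1 t)
    have := unorm_nonneg (deriv (fun t => p.1.1 t - p.1.2 t))
    have := unorm_nonneg (iteratedDeriv 2 p.1.2)
    positivity

/-- Theorem 2: `(4/9)·K̃₂(f, h/8, h/(4√3)) ≤ W₂*(f, χ_h) ≤ 2·K̃₂(f, h/8, h/(4√3))`. -/
theorem stmt2 (f : ℝ → ℝ) (hf : Continuous f) (hper : Function.Periodic f 1)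
    (h : ℝ) (hh : 0 < h) :
    (4/9) * Ktilde2 f (h/8) (h / (4 * Real.sqrt 3)) ≤ W2star f h 1 ∧
    W2star f h 1 ≤ 2 * Ktilde2 f (h/8) (h / (4 * Real.sqrt 3)) := by
  have hsq : (h / (4 * Real.sqrt 3)) ^ 2 = h ^ 2 / 48 := by
    rw [div_pow, mul_pow, Real.sq_sqrt (by norm_num)]; norm_num
  constructor
  · have h1 := Ktilde2_le (f := f) (h₁ := h / 8) (h₂ := h / (4 * Real.sqrt 3)) (by positivity)
      (contDiff_smooth hf (h / 2)) (periodic_smooth hf hper (h / 2))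
    have h2 : unorm (fun t => f t - smooth f (h / 2) t) ≤ W2star f h 1 :=
      unorm_le (sub_smooth_le hf hper hh)
    have h3 : unorm (iteratedDeriv 2 (smooth f (h / 2))) ≤ 24 / h ^ 2 * W2star f h 1 := by
      rw [iteratedDeriv_smooth hf]
      refine unorm_le fun x => ?_
      rw [abs_mul, abs_of_pos (by positivity)]
      calc _ ≤ 3 / (h / 2) ^ 3 * (2 * (h / 2) * W2star f h 1) := by
            gcongr; exact centered_le hf hper (by positivity) le_rfl x
        _ = 24 / h ^ 2 * W2star f h 1 := by field_simp; ring
    have h4 : h ^ 2 / 48 * unorm (iteratedDeriv 2 (smooth f (h / 2))) ≤ W2star f h 1 / 2 := by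
      calc _ ≤ h ^ 2 / 48 * (24 / h ^ 2 * W2star f h 1) := by gcongr
        _ = _ := by field_simp; ring
    have h5 : 0 ≤ W2star f h 1 := (unorm_nonneg _).trans h2
    rw [hsq] at h1
    linarith
  · have : Nonempty {p : (ℝ → ℝ) × (ℝ → ℝ) //
        (ContDiff ℝ 1 p.1 ∧ Function.Periodic p.1 1) ∧
        (ContDiff ℝ 2 p.2 ∧ Function.Periodic p.2 1)} :=
      ⟨⟨(fun _ => 0, fun _ => 0), ⟨contDiff_const, fun _ => rfl⟩, contDiff_const, fun _ => rfl⟩⟩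
    have : W2star f h 1 / 2 ≤ Ktilde2 f (h/8) (h / (4 * Real.sqrt 3)) := by
      refine le_ciInf fun p => ?_
      have := W2star_le hf hper hh p.2.1.1 p.2.1.2 p.2.2.1 p.2.2.2
      rw [hsq]
      linarith
    linarith
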